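/- arXiv:2202.05990 — 2 statements merged into one kernel-verified Lean document; each statement's English description precedes it below -/
import Mathlib

section
/- Neighbor constraints on anchored corenesses (Theorem 4.3): let G be a finite directed graph, v a vertex, and k a natural number with k ≤ k_max(v), and write l = l_max(v,k). If l > 0, then (i) v has at least k in-neighbors v' in G with k ≤ k_max(v') and l_max(v',k) ≥ l, and (ii) v has at least l out-neighbors v'' in G with k ≤ k_max(v'') and l_max(v'',k) ≥ l. -/
open Finset

variable {V : Type*} [Fintype V] [DecidableEq V]

/-- The in-neighbors of `v` within `S`: vertices `u ∈ S` with an edge `u → v`. -/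
def inN (E : V → V → Prop) [DecidableRel E] (S : Finset V) (v : V) : Finset V :=
  S.filter (fun u => E u v)

/-- The out-neighbors of `v` within `S`: vertices `u ∈ S` with an edge `v → u`. -/
def outN (E : V → V → Prop) [DecidableRel E] (S : Finset V) (v : V) : Finset V :=
  S.filter (fun u => E v u)

/-- `S` satisfies the `(k,l)`-degree constraints: every `v ∈ S` has at least `k`
in-neighbors in `S` and at least `l` out-neighbors in `S`. -/
def satisfiesKL (E : V → V → Prop) [DecidableRel E] (k l : ℕ) (S : Finset V) : Prop :=
  ∀ v ∈ S, k ≤ (inN E S v).card ∧ l ≤ (outN E S v).card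

instance (E : V → V → Prop) [DecidableRel E] (k l : ℕ) (S : Finset V) :
    Decidable (satisfiesKL E k l S) := by unfold satisfiesKL; infer_instance

/-- The `(k,l)`-core of the graph: the union of all vertex subsets satisfying the
`(k,l)`-degree constraints. -/
def core (E : V → V → Prop) [DecidableRel E] (k l : ℕ) : Finset V :=
  (Finset.univ.powerset.filter (satisfiesKL E k l)).sup id

/-- `kmax E v`: the largest `k` such that `v` belongs to the `(k,0)`-core. -/
noncomputable def kmax (E : V → V → Prop) [DecidableRel E] (v : V) : ℕ :=
  sSup {k : ℕ | v ∈ core E k 0}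

/-- `lmax E v k`: the largest `l` such that `v` belongs to the `(k,l)`-core. -/
noncomputable def lmax (E : V → V → Prop) [DecidableRel E] (v : V) (k : ℕ) : ℕ :=
  sSup {l : ℕ | v ∈ core E k l}

/-- The H-index of a finite multiset of naturals: the largest `h` such that at least
`h` elements (with multiplicity) are `≥ h`. -/
noncomputable def hIndex (M : Multiset ℕ) : ℕ :=
  sSup {h : ℕ | h ≤ (M.filter (fun x => h ≤ x)).card}

/-- The `n`-order in-H-index of a vertex `v` in the graph with vertex set `S`
and edge relation `E`. -/
noncomputable def iH (E : V → V → Prop) [DecidableRel E] (S : Finset V) : ℕ → V → ℕ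
  | 0 => fun v => (inN E S v).card
  | n + 1 => fun v => hIndex ((inN E S v).val.map (iH E S n))

/-- The `n`-order out-H-index of a vertex `v` in the graph with vertex set `S`
and edge relation `E`. -/
noncomputable def oH (E : V → V → Prop) [DecidableRel E] (S : Finset V) : ℕ → V → ℕ
  | 0 => fun v => (outN E S v).card
  | n + 1 => fun v => hIndex ((outN E S v).val.map (oH E S n))

/-- The eventual (limit) value of the in-H-index sequence. -/
noncomputable def iHlim (E : V → V → Prop) [DecidableRel E] (S : Finset V) (v : V) : ℕ :=
  ⨅ n, iH E S n v

/-- The eventual (limit) value of the out-H-index sequence. -/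
noncomputable def oHlim (E : V → V → Prop) [DecidableRel E] (S : Finset V) (v : V) : ℕ :=
  ⨅ n, oH E S n v

/-- `(k,l)` is a skyline coreness of `v`: `v` is in the `(k,l)`-core and there is no
pair `(k',l')` strictly dominating `(k,l)` with `v` in the `(k',l')`-core. -/
def skyline (E : V → V → Prop) [DecidableRel E] (v : V) (p : ℕ × ℕ) : Prop :=
  v ∈ core E p.1 p.2 ∧
    ¬ ∃ q : ℕ × ℕ, (p.1 ≤ q.1 ∧ p.2 ≤ q.2 ∧ p ≠ q) ∧ v ∈ core E q.1 q.2

/-!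
A union of sets satisfying the degree constraints satisfies them, so the `(k,l)`-core satisfies its
own constraints; and it consists exactly of the `u` with `k ≤ kmax u` and `l ≤ lmax u k`, because
cores shrink as `k` and `l` grow. For `l = lmax v k` the vertex `v` lies in this core, and the
neighbors that the constraints provide for `v` there are the required ones.
-/

theorem mem_iff_le_sSup_of_isLowerSet {s : Set ℕ} (hlower : IsLowerSet s) (hne : s.Nonempty)
    (hbdd : BddAbove s) {n : ℕ} : n ∈ s ↔ n ≤ sSup s :=
  ⟨le_csSup hbdd, fun hn => hlower hn (Nat.sSup_mem hne hbdd)⟩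

section Core

variable {E : V → V → Prop} [DecidableRel E] {k k' l l' : ℕ} {S : Finset V} {v : V}

theorem mem_core : v ∈ core E k l ↔ ∃ S, satisfiesKL E k l S ∧ v ∈ S := by
  simp [core, Finset.mem_sup]

theorem satisfiesKL.subset_core (hS : satisfiesKL E k l S) : S ⊆ core E k l :=
  fun _ hv => mem_core.2 ⟨S, hS, hv⟩

theorem satisfiesKL_core : satisfiesKL E k l (core E k l) := by
  intro v hv
  obtain ⟨S, hS, hvS⟩ := mem_core.1 hv
  have hsub : S ⊆ core E k l := hS.subset_core
  exact ⟨(hS v hvS).1.trans (card_le_card (filter_subset_filter _ hsub)),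
    (hS v hvS).2.trans (card_le_card (filter_subset_filter _ hsub))⟩

theorem core_anti (hk : k' ≤ k) (hl : l' ≤ l) : core E k l ⊆ core E k' l' :=
  satisfiesKL.subset_core fun v hv =>
    ⟨hk.trans (satisfiesKL_core v hv).1, hl.trans (satisfiesKL_core v hv).2⟩

theorem mem_core_zero_zero : v ∈ core E 0 0 :=
  mem_core.2 ⟨univ, fun _ _ => ⟨Nat.zero_le _, Nat.zero_le _⟩, mem_univ v⟩

theorem le_card_of_mem_core_left (hv : v ∈ core E k l) : k ≤ Fintype.card V :=
  (satisfiesKL_core v hv).1.trans (card_le_univ _)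

theorem le_card_of_mem_core_right (hv : v ∈ core E k l) : l ≤ Fintype.card V :=
  (satisfiesKL_core v hv).2.trans (card_le_univ _)

theorem mem_core_zero_iff_le_kmax : v ∈ core E k 0 ↔ k ≤ kmax E v :=
  mem_iff_le_sSup_of_isLowerSet (s := {k | v ∈ core E k 0})
    (fun _ _ hle hv => core_anti hle le_rfl hv) ⟨0, mem_core_zero_zero⟩
    ⟨Fintype.card V, fun _ => le_card_of_mem_core_left⟩

theorem mem_core_iff_le_lmax (hv : v ∈ core E k 0) : v ∈ core E k l ↔ l ≤ lmax E v k :=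
  mem_iff_le_sSup_of_isLowerSet (s := {l | v ∈ core E k l})
    (fun _ _ hle hv => core_anti le_rfl hle hv) ⟨0, hv⟩
    ⟨Fintype.card V, fun _ => le_card_of_mem_core_right⟩

/- `lmax E v k` is the junk value `sSup ∅ = 0` when `kmax E v < k`. -/
theorem mem_core_iff : v ∈ core E k l ↔ k ≤ kmax E v ∧ l ≤ lmax E v k := by
  rw [← mem_core_zero_iff_le_kmax]
  constructor
  · intro hv
    have hv₀ : v ∈ core E k 0 := core_anti le_rfl (Nat.zero_le l) hv
    exact ⟨hv₀, (mem_core_iff_le_lmax hv₀).1 hv⟩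
  · rintro ⟨hv₀, hl⟩
    exact (mem_core_iff_le_lmax hv₀).2 hl

theorem coe_inN_core :
    (inN E (core E k l) v : Set V) = {u | E u v ∧ k ≤ kmax E u ∧ l ≤ lmax E u k} := by
  ext u
  simp [inN, mem_core_iff, and_comm]

theorem coe_outN_core :
    (outN E (core E k l) v : Set V) = {u | E v u ∧ k ≤ kmax E u ∧ l ≤ lmax E u k} := by
  ext u
  simp [outN, mem_core_iff, and_comm]

end Core

/-- **Theorem 4.3: neighbor constraints on anchored corenesses.**
If `k ≤ kmax v` and `l = lmax v k > 0`, then `v` has at least `k` in-neighbors `v'`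
with `k ≤ kmax v'` and `lmax v' k ≥ l`, and at least `l` out-neighbors `v''`
with `k ≤ kmax v''` and `lmax v'' k ≥ l`. -/
theorem anchored_coreness_neighbor_constraints (E : V → V → Prop) [DecidableRel E]
    (v : V) (k : ℕ) (hk : k ≤ kmax E v) (hl : 0 < lmax E v k) :
    k ≤ Set.ncard {u : V | E u v ∧ k ≤ kmax E u ∧ lmax E v k ≤ lmax E u k} ∧
    lmax E v k ≤ Set.ncard {u : V | E v u ∧ k ≤ kmax E u ∧ lmax E v k ≤ lmax E u k} := by
  have hv : v ∈ core E k (lmax E v k) := mem_core_iff.2 ⟨hk, le_rfl⟩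
  simp only [← coe_inN_core, ← coe_outN_core, Set.ncard_coe_finset]
  exact satisfiesKL_core v hv
end

section
/- Monotonicity of the out-H-index in the order: for every finite directed graph G, every vertex v, and every natural number n, it holds that oH_G^(n+1)(v) ≤ oH_G^(n)(v); hence the sequence n ↦ oH_G^(n)(v) is non-increasing and eventually constant. -/
open Finset

variable {V : Type*} [Fintype V] [DecidableEq V]

theorem countP_le_countP_of_rel {α β : Type*} {r : α → β → Prop} {p : α → Prop} {q : β → Prop}
    [DecidablePred p] [DecidablePred q] (hpq : ∀ a b, r a b → p a → q b)
    {s : Multiset α} {t : Multiset β} (hst : Multiset.Rel r s t) :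
    s.countP p ≤ t.countP q := by
  induction hst with
  | zero => rfl
  | cons hab _ ih =>
    simp only [Multiset.countP_cons]
    grind

section HIndex

variable {M N : Multiset ℕ} {k : ℕ}

theorem bddAbove_setOf_le_card_filter_le (M : Multiset ℕ) :
    BddAbove {h : ℕ | h ≤ (M.filter (fun x => h ≤ x)).card} :=
  ⟨M.card, fun _ hh => hh.trans (Multiset.card_le_card (M.filter_le _))⟩

theorem le_hIndex_iff : k ≤ hIndex M ↔ k ≤ M.countP (fun x => k ≤ x) := by
  have hbdd := bddAbove_setOf_le_card_filter_le M
  have hIndex_mem : hIndex M ∈ {h : ℕ | h ≤ (M.filter (fun x => h ≤ x)).card} :=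
    Nat.sSup_mem ⟨0, Nat.zero_le _⟩ hbdd
  simp only [Multiset.countP_eq_card_filter]
  refine ⟨fun hk => ?_, fun hk => le_csSup hbdd hk⟩
  calc k ≤ hIndex M := hk
    _ ≤ (M.filter (fun x => hIndex M ≤ x)).card := hIndex_mem
    _ ≤ (M.filter (fun x => k ≤ x)).card :=
      Multiset.card_le_card (M.monotone_filter_right fun _ => hk.trans)

theorem hIndex_le_card (M : Multiset ℕ) : hIndex M ≤ M.card :=
  (le_hIndex_iff.1 le_rfl).trans (M.countP_le_card _)

theorem hIndex_le_hIndex_of_rel_le (h : Multiset.Rel (· ≤ ·) M N) : hIndex M ≤ hIndex N :=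
  le_hIndex_iff.2 <| (le_hIndex_iff.1 le_rfl).trans <|
    countP_le_countP_of_rel (fun _ _ hab ha => ha.trans hab) h

end HIndex

section OutHIndex

variable {W : Type*} (E : W → W → Prop) [DecidableRel E] (S : Finset W)

theorem oH_succ_le (n : ℕ) (v : W) : oH E S (n + 1) v ≤ oH E S n v := by
  induction n generalizing v with
  | zero => exact (hIndex_le_card _).trans_eq (Multiset.card_map _ _)
  | succ n ih =>
    exact hIndex_le_hIndex_of_rel_le <|
      Multiset.rel_map.2 (Multiset.rel_refl_of_refl_on fun u _ => ih u)

theorem oH_antitone (v : W) : Antitone fun n => oH E S n v :=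
  antitone_nat_of_succ_le fun n => oH_succ_le E S n v

theorem oH_antitone_and_eventually_const_general (v : W) :
    (∀ n : ℕ, oH E S (n + 1) v ≤ oH E S n v) ∧
    (∃ N : ℕ, ∀ n : ℕ, N ≤ n → oH E S n v = oH E S N v) := by
  obtain ⟨N, hN⟩ := WellFoundedLT.antitone_chain_condition (oH_antitone E S v)
  exact ⟨fun n => oH_succ_le E S n v, N, fun n hn => (hN n hn).symm⟩

end OutHIndex

/-- **Monotonicity of the out-H-index in the order.** The sequence
`n ↦ oH_G^(n)(v)` is non-increasing, hence eventually constant. -/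
theorem oH_antitone_and_eventually_const (E : V → V → Prop) [DecidableRel E] (v : V) :
    (∀ n : ℕ, oH E Finset.univ (n + 1) v ≤ oH E Finset.univ n v) ∧
    (∃ N : ℕ, ∀ n : ℕ, N ≤ n → oH E Finset.univ n v = oH E Finset.univ N v) :=
  oH_antitone_and_eventually_const_general E univ v
end
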